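/- The composite of two mergers between nested graphs is a merger. -/

import Mathlib

open CategoryTheory

universe v u

/-- A morphism in a category is an identity morphism (up to `eqToHom`). -/
def IsId {C : Type u} [Category.{v} C] {A B : C} (f : A ⟶ B) : Prop :=
  ∃ h : A = B, f = eqToHom h

/-- A flag in a nested graph is a non-identity morphism. -/
def IsFlag {C : Type u} [Category.{v} C] {A B : C} (f : A ⟶ B) : Prop :=
  ¬ IsId f

/-- An irreducible flag is a flag that cannot be written as the composite of two flags. -/
def IsIrred {C : Type u} [Category.{v} C] {A B : C} (f : A ⟶ B) : Prop :=
  IsFlag f ∧ ¬ ∃ (X : C) (g : A ⟶ X) (h : X ⟶ B), IsFlag g ∧ IsFlag h ∧ g ≫ h = f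

/-- A grading: a functor to the finite ordinal `Fin n` (viewed as a preorder category)
sending every non-identity morphism to a non-identity morphism. -/
def IsGrading {C : Type u} [Category.{v} C] {n : ℕ} (G : C ⥤ Fin n) : Prop :=
  ∀ ⦃A B : C⦄ (f : A ⟶ B), IsFlag f → IsFlag (G.map f)

/-- A nested graph: a category admitting a grading into some finite ordinal. -/
def IsNestedGraph (C : Type u) [Category.{v} C] : Prop :=
  ∃ (n : ℕ) (G : C ⥤ Fin n), IsGrading G

/-- A functor `φ` contracts a flag `f` if `φ.map f` is an identity. -/
def Contracts {C D : Type u} [Category.{v} C] [Category.{v} D]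
    (φ : C ⥤ D) {A B : C} (f : A ⟶ B) : Prop :=
  IsId (φ.map f)

/-- An admissible functor: it maps irreducible flags to identities or irreducible flags,
and whenever it contracts an irreducible flag with domain `A`, it contracts every
irreducible flag with domain `A`. -/
def IsAdmissible {C D : Type u} [Category.{v} C] [Category.{v} D] (φ : C ⥤ D) : Prop :=
  (∀ ⦃A B : C⦄ (f : A ⟶ B), IsIrred f → IsId (φ.map f) ∨ IsIrred (φ.map f)) ∧
  (∀ ⦃A B B' : C⦄ (f : A ⟶ B) (g : A ⟶ B'), IsIrred f → IsIrred g →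
      Contracts φ f → Contracts φ g)

/-- The morphisms of the codomain generated by the image of a functor. -/
inductive GenBy {C D : Type u} [Category.{v} C] [Category.{v} D] (φ : C ⥤ D) :
    ∀ {X Y : D}, (X ⟶ Y) → Prop
  | id (X : D) : GenBy φ (𝟙 X)
  | map {A B : C} (f : A ⟶ B) : GenBy φ (φ.map f)
  | comp {X Y Z : D} (f : X ⟶ Y) (g : Y ⟶ Z) :
      GenBy φ f → GenBy φ g → GenBy φ (f ≫ g)

/-- An epi-functor: its image generates the codomain. -/
def IsEpiFunctor {C D : Type u} [Category.{v} C] [Category.{v} D] (φ : C ⥤ D) : Prop :=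
  Function.Surjective φ.obj ∧ ∀ ⦃X Y : D⦄ (f : X ⟶ Y), GenBy φ f

/-- `μ : C ⥤ D` exhibits `D` as the quotient of `C` identifying `r`-related objects,
with morphisms freely generated by the morphisms of `C` subject to the composition
relations of `C` (expressed via the universal property). -/
def IsQuotientBy {C D : Type u} [Category.{v} C] [Category.{v} D]
    (r : C → C → Prop) (μ : C ⥤ D) : Prop :=
  (∀ A B : C, μ.obj A = μ.obj B ↔ Relation.EqvGen r A B) ∧
  Function.Surjective μ.obj ∧
  (∀ ⦃X Y : D⦄ (f : X ⟶ Y), GenBy μ f) ∧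
  (∀ (E : Type u) [Category.{v} E] (F : C ⥤ E),
      (∀ A B : C, r A B → F.obj A = F.obj B) → ∃! F' : D ⥤ E, μ ⋙ F' = F)

/-- A merger: an admissible epi-functor exhibiting its codomain as the quotient of its
domain by an equivalence relation on objects, with morphisms freely generated subject to
the composition relations of the domain. -/
def IsMerger {C D : Type u} [Category.{v} C] [Category.{v} D] (μ : C ⥤ D) : Prop :=
  IsAdmissible μ ∧ IsEpiFunctor μ ∧
    ∃ r : C → C → Prop, Equivalence r ∧ IsQuotientBy r μ

/-- `A` is a vertex of its fiber under `φ`: it is not the domain of any flag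
contracted by `φ`. -/
def IsVertexOver {C D : Type u} [Category.{v} C] [Category.{v} D]
    (φ : C ⥤ D) (A : C) : Prop :=
  ∀ ⦃B : C⦄ (f : A ⟶ B), Contracts φ f → IsId f

/-- `A₁` is a vertex of the fiber of `φ` over `A₂`. -/
def IsFiberVertex {C D : Type u} [Category.{v} C] [Category.{v} D]
    (φ : C ⥤ D) (A₂ : D) (A₁ : C) : Prop :=
  φ.obj A₁ = A₂ ∧ IsVertexOver φ A₁

/-- A contraction: an admissible epi-functor each of whose fibers is a corolla,
i.e. has a unique vertex. -/
def IsContraction {C D : Type u} [Category.{v} C] [Category.{v} D] (κ : C ⥤ D) : Prop :=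
  IsAdmissible κ ∧ IsEpiFunctor κ ∧ ∀ A₂ : D, ∃! A₁ : C, IsFiberVertex κ A₂ A₁

/-- The canonical merger relation of `φ`: it relates distinct objects `A ≠ B` exactly when
`φ A = φ B` and both `A` and `B` are vertices of the fiber of `φ` over `φ A`. -/
def mergerRel {C D : Type u} [Category.{v} C] [Category.{v} D] (φ : C ⥤ D) :
    C → C → Prop :=
  fun A B => A ≠ B ∧ φ.obj A = φ.obj B ∧ IsVertexOver φ A ∧ IsVertexOver φ B

/-- A canonical merger–contraction decomposition of `φ`: the merger part is the quotient
of the domain identifying, within each fiber of `φ`, all objects that are vertices of that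
fiber. -/
def IsCanonicalDecomp {C P D : Type u} [Category.{v} C] [Category.{v} P] [Category.{v} D]
    (φ : C ⥤ D) (μ : C ⥤ P) (κ : P ⥤ D) : Prop :=
  IsQuotientBy (mergerRel φ) μ ∧ μ ⋙ κ = φ

/-- Two merger–contraction pairs are equal as morphisms of nested graphs: one is obtained
from the other by shifting an isomorphism from the merger to the contraction. -/
def PairEquiv {A B P P' : Type u} [Category.{v} A] [Category.{v} B]
    [Category.{v} P] [Category.{v} P']
    (μ : A ⥤ P) (κ : P ⥤ B) (μ' : A ⥤ P') (κ' : P' ⥤ B) : Prop :=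
  ∃ (e : P ⥤ P') (e' : P' ⥤ P), e ⋙ e' = 𝟭 P ∧ e' ⋙ e = 𝟭 P' ∧
    μ ⋙ e = μ' ∧ e ⋙ κ' = κ

/-- A category contains no cycle of flags. -/
def NoFlagCycles (C : Type u) [Category.{v} C] : Prop :=
  ∀ (k : ℕ), 0 < k → ∀ (obj : Fin (k + 1) → C)
    (flag : ∀ i : Fin k, obj i.castSucc ⟶ obj i.succ),
    (∀ i, IsFlag (flag i)) → obj 0 ≠ obj (Fin.last k)

theorem IsId.functor_map {C D : Type u} [Category.{v} C] [Category.{v} D] (φ : C ⥤ D)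
    {A B : C} {f : A ⟶ B} (hf : IsId f) : IsId (φ.map f) := by
  obtain ⟨rfl, rfl⟩ := hf
  exact ⟨rfl, by simp⟩

theorem IsAdmissible.comp {C D E : Type u} [Category.{v} C] [Category.{v} D] [Category.{v} E]
    {φ : C ⥤ D} {ψ : D ⥤ E} (hφ : IsAdmissible φ) (hψ : IsAdmissible ψ) :
    IsAdmissible (φ ⋙ ψ) := by
  refine ⟨fun A B f hf => ?_, fun A B B' f g hf hg hc => ?_⟩
  · rcases hφ.1 f hf with h | h
    · exact Or.inl (h.functor_map ψ)
    · exact hψ.1 _ h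
  · rcases hφ.1 g hg with h | h
    · exact h.functor_map ψ
    · rcases hφ.1 f hf with h' | h'
      · exact IsId.functor_map ψ (hφ.2 f g hf hg h')
      · exact hψ.2 _ _ h' h hc

theorem GenBy.functor_map {C D E : Type u} [Category.{v} C] [Category.{v} D] [Category.{v} E]
    {φ : C ⥤ D} (ψ : D ⥤ E) {X Y : D} {f : X ⟶ Y} (hf : GenBy φ f) :
    GenBy (φ ⋙ ψ) (ψ.map f) := by
  induction hf with
  | id X => rw [ψ.map_id]; exact GenBy.id _
  | map f => exact GenBy.map (φ := φ ⋙ ψ) f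
  | comp f g _ _ hf hg => rw [ψ.map_comp]; exact GenBy.comp _ _ hf hg

theorem IsEpiFunctor.comp {C D E : Type u} [Category.{v} C] [Category.{v} D] [Category.{v} E]
    {φ : C ⥤ D} {ψ : D ⥤ E} (hφ : IsEpiFunctor φ) (hψ : IsEpiFunctor ψ) :
    IsEpiFunctor (φ ⋙ ψ) := by
  refine ⟨hψ.1.comp hφ.1, fun X Y f => ?_⟩
  induction hψ.2 f with
  | id X => exact GenBy.id X
  | map f => exact (hφ.2 f).functor_map ψ
  | comp f g _ _ hf hg => exact GenBy.comp _ _ hf hg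

/-- A composite of quotients is the quotient by the kernel relation on objects. -/
theorem IsQuotientBy.comp {C D E : Type u} [Category.{v} C] [Category.{v} D] [Category.{v} E]
    {φ : C ⥤ D} {ψ : D ⥤ E} {r : C → C → Prop} {s : D → D → Prop}
    (hφ : IsQuotientBy r φ) (hψ : IsQuotientBy s ψ) :
    IsQuotientBy (fun A B => (φ ⋙ ψ).obj A = (φ ⋙ ψ).obj B) (φ ⋙ ψ) := by
  obtain ⟨hφobj, hφsurj, hφgen, hφuniv⟩ := hφ
  obtain ⟨hψobj, hψsurj, hψgen, hψuniv⟩ := hψ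
  have hepi : IsEpiFunctor (φ ⋙ ψ) := IsEpiFunctor.comp ⟨hφsurj, hφgen⟩ ⟨hψsurj, hψgen⟩
  refine ⟨fun A B => ⟨fun h => .rel A B h, fun h => ?_⟩, hepi.1, hepi.2, ?_⟩
  · induction h with
    | rel _ _ h => exact h
    | refl _ => rfl
    | symm _ _ _ h => exact h.symm
    | trans _ _ _ _ _ h h' => exact h.trans h'
  · intro K _ F hF
    obtain ⟨F', rfl, hF'uniq⟩ := hφuniv K F fun A B h =>
      hF A B (congrArg ψ.obj ((hφobj A B).2 (.rel A B h)))
    obtain ⟨F'', rfl, hF''uniq⟩ := hψuniv K F' fun X Y h => by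
      obtain ⟨A, rfl⟩ := hφsurj X
      obtain ⟨B, rfl⟩ := hφsurj Y
      exact hF A B ((hψobj _ _).2 (.rel _ _ h))
    exact ⟨F'', rfl, fun G hG => hF''uniq G (hF'uniq (ψ ⋙ G) hG)⟩

/-- the composite of two mergers between nested graphs is a merger. -/
theorem merger_comp {N₁ N₂ N₃ : Type u}
    [Category.{v} N₁] [Category.{v} N₂] [Category.{v} N₃]
    (h₁ : IsNestedGraph N₁) (h₂ : IsNestedGraph N₂) (h₃ : IsNestedGraph N₃)
    (μ₁ : N₁ ⥤ N₂) (μ₂ : N₂ ⥤ N₃)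
    (hμ₁ : IsMerger μ₁) (hμ₂ : IsMerger μ₂) :
    IsMerger (μ₁ ⋙ μ₂) := by
  obtain ⟨hadm₁, hepi₁, r, -, hr⟩ := hμ₁
  obtain ⟨hadm₂, hepi₂, s, -, hs⟩ := hμ₂
  exact ⟨hadm₁.comp hadm₂, hepi₁.comp hepi₂, fun A B => (μ₁ ⋙ μ₂).obj A = (μ₁ ⋙ μ₂).obj B,
    ⟨fun _ => rfl, fun h => h.symm, fun h h' => h.trans h'⟩, hr.comp hs⟩
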